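/- The map ℚ × (∏_p ℤ_p) → ℚ ⊗_ℤ (∏_p ℤ_p) sending (q, x) to q ⊗ 1 − 1 ⊗ x is surjective: every element of ℚ ⊗_ℤ (∏_p ℤ_p) can be written as q ⊗ 1 + 1 ⊗ x for some q ∈ ℚ and x ∈ ∏_p ℤ_p. -/

import Mathlib

open TensorProduct

noncomputable section

/-- The product of the `p`-adic integers over all primes `p`. -/
abbrev ProdPadicInt : Type :=
  ∀ p : {p : ℕ // p.Prime}, @PadicInt p.1 ⟨p.2⟩

/-- Every element of `∏_p ℤ_p` is congruent to an integer modulo a given prime `ℓ`. -/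
theorem ProdPadicInt.exists_eq_intCast_add_prime_mul {ℓ : ℕ} (hℓ : ℓ.Prime) (x : ProdPadicInt) :
    ∃ (n : ℤ) (y : ProdPadicInt), x = n + ℓ * y := by
  obtain ⟨n, hn⟩ : ∃ n : ℤ, ∀ p : {p : ℕ // p.Prime},
      haveI : Fact p.1.Prime := ⟨p.2⟩
      (ℓ : ℤ_[p.1]) ∣ x p - n := by
    have : Fact ℓ.Prime := ⟨hℓ⟩
    refine ⟨(PadicInt.zmodRepr (p := ℓ) (x ⟨ℓ, hℓ⟩) : ℕ), fun p => ?_⟩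
    have : Fact p.1.Prime := ⟨p.2⟩
    by_cases h : p = ⟨ℓ, hℓ⟩
    · subst h
      have := PadicInt.sub_zmodRepr_mem (p := ℓ) (x ⟨ℓ, hℓ⟩)
      rw [PadicInt.maximalIdeal_eq_span_p, Ideal.mem_span_singleton] at this
      simpa using this
    · refine IsUnit.dvd ?_
      rw [PadicInt.isUnit_iff, PadicInt.norm_natCast_eq_one_iff]
      exact (Nat.coprime_primes p.2 hℓ).2 fun hp => h (Subtype.ext hp)
  choose y hy using hn
  refine ⟨n, y, funext fun p => ?_⟩
  have : Fact p.1.Prime := ⟨p.2⟩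
  exact eq_add_of_sub_eq' (hy p)

/-- Every element of `∏_p ℤ_p` is congruent to an integer modulo a given nonzero `d`. -/
theorem ProdPadicInt.exists_eq_intCast_add_mul {d : ℕ} (hd : d ≠ 0) (x : ProdPadicInt) :
    ∃ (n : ℤ) (y : ProdPadicInt), x = n + d * y := by
  induction d using induction_on_primes generalizing x with
  | zero => exact absurd rfl hd
  | one => exact ⟨0, x, by simp⟩
  | prime_mul ℓ d hℓ ih =>
    obtain ⟨n, y, rfl⟩ := exists_eq_intCast_add_prime_mul hℓ x
    obtain ⟨m, z, rfl⟩ := ih (right_ne_zero_of_mul hd) y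
    exact ⟨n + ℓ * m, z, by push_cast; ring⟩

/-- The map `ℚ × ∏_p ℤ_p → ℚ ⊗_ℤ ∏_p ℤ_p`, `(q, x) ↦ q ⊗ 1 − 1 ⊗ x`, is surjective:
every element of the tensor product is of the form `q ⊗ 1 + 1 ⊗ x`. -/
theorem hasse_square_surjective :
    Function.Surjective (fun qx : ℚ × ProdPadicInt =>
      qx.1 ⊗ₜ[ℤ] (1 : ProdPadicInt) - (1 : ℚ) ⊗ₜ[ℤ] qx.2) := by
  intro t
  induction t using TensorProduct.induction_on with
  | zero => exact ⟨(0, 0), by simp⟩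
  | add s t hs ht =>
    obtain ⟨⟨q, x⟩, rfl⟩ := hs
    obtain ⟨⟨r, y⟩, rfl⟩ := ht
    exact ⟨(q + r, x + y), by simp only [add_tmul, tmul_add]; abel⟩
  | tmul q x =>
    obtain ⟨n, y, rfl⟩ := ProdPadicInt.exists_eq_intCast_add_mul q.den_nz x
    refine ⟨(n • q, -(q.num • y)), ?_⟩
    have hn : (n : ProdPadicInt) = n • 1 := by simp
    have hy : (q.den : ProdPadicInt) * y = (q.den : ℤ) • y := by simp
    have hq : (q.den : ℤ) • q = q.num • (1 : ℚ) := by simp [Rat.den_mul_eq_num]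
    simp only [tmul_neg, sub_neg_eq_add, tmul_add]
    rw [hn, hy, ← smul_tmul n, ← smul_tmul (q.den : ℤ), hq, smul_tmul q.num]
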